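/- Let p ≥ 7 be an odd integer and let u be twice differentiable on (0,1) and satisfy the self-similar profile equation (1−ρ²)u''(ρ) + (2/ρ − (2+2α)ρ)u'(ρ) − α(α+1)u(ρ) + u(ρ)^p = 0 for all ρ ∈ (0,1). Define H(ρ) = (1−ρ²)u'(ρ)²/2 + u(ρ)^{p+1}/(p+1) − (p+1)u(ρ)²/(p−1)². Then H'(ρ) = ((p+3)ρ/(p−1) − 2/ρ)·u'(ρ)² for all ρ ∈ (0,1); in particular H'(ρ) ≤ 0 on (0,1), so H is nonincreasing there. Moreover H(ρ) ≥ −(1/(p−1))·(2(p+1)/(p−1)²)^{2/(p−1)} for every ρ ∈ (0,1). -/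

import Mathlib

open Set Real Filter

/-- The exponent `α = 2/(p-1)`. -/
noncomputable def alphaP (p : ℕ) : ℝ := 2 / ((p : ℝ) - 1)

/-- `b₀ = (2(p+1)/(p-1)²)^(1/(p-1))`, the constant solution. -/
noncomputable def bZero (p : ℕ) : ℝ :=
  (2 * ((p : ℝ) + 1) / ((p : ℝ) - 1) ^ 2) ^ ((1 : ℝ) / ((p : ℝ) - 1))

/-- `b∞ = (2(p-3)/(p-1)²)^(1/(p-1))`. -/
noncomputable def bInfty (p : ℕ) : ℝ :=
  (2 * ((p : ℝ) - 3) / ((p : ℝ) - 1) ^ 2) ^ ((1 : ℝ) / ((p : ℝ) - 1))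

/-- The singular static solution `u∞(ρ) = b∞ ρ^(-α)`. -/
noncomputable def uInfty (p : ℕ) (ρ : ℝ) : ℝ := bInfty p * ρ ^ (-(alphaP p))

/-- The self-similar profile equation
`(1-ρ²)u'' + (2/ρ - (2+2α)ρ)u' - α(α+1)u + u^p = 0` at the point `ρ`. -/
def ProfileEq (p : ℕ) (u : ℝ → ℝ) (ρ : ℝ) : Prop :=
  (1 - ρ ^ 2) * deriv (deriv u) ρ + (2 / ρ - (2 + 2 * alphaP p) * ρ) * deriv u ρ
    - alphaP p * (alphaP p + 1) * u ρ + u ρ ^ p = 0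

/-- The Lyapunov function `H = (1-ρ²)u'²/2 + u^(p+1)/(p+1) - (p+1)u²/(p-1)²`. -/
noncomputable def lyapunovH (p : ℕ) (u : ℝ → ℝ) (ρ : ℝ) : ℝ :=
  (1 - ρ ^ 2) * (deriv u ρ) ^ 2 / 2 + u ρ ^ (p + 1) / ((p : ℝ) + 1)
    - ((p : ℝ) + 1) * (u ρ) ^ 2 / ((p : ℝ) - 1) ^ 2

theorem amgm_aux (y c : ℝ) (hy : 0 ≤ y) (hc : 0 ≤ c) (k : ℕ) :
    ((k : ℝ) + 1) * c ^ k * y ≤ y ^ (k + 1) + k * c ^ (k + 1) := by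
  induction k with
  | zero => simp
  | succ k ih =>
    have h1 := mul_le_mul_of_nonneg_left ih hy
    have h2 : 0 ≤ ((k : ℝ) + 1) * c ^ k * (y - c) ^ 2 := by positivity
    push_cast
    simp only [pow_succ] at *
    nlinarith

/-- `H' = ((p+3)ρ/(p-1) - 2/ρ) u'² ≤ 0` on `(0,1)`, so `H` is
nonincreasing there, and `H ≥ -(1/(p-1))(2(p+1)/(p-1)²)^(2/(p-1))`. -/
theorem lyapunov_monotone (p : ℕ) (hp_odd : Odd p) (hp : 7 ≤ p) (u : ℝ → ℝ)
    (hdiff : ∀ ρ ∈ Ioo (0 : ℝ) 1, DifferentiableAt ℝ u ρ)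
    (hdiff2 : ∀ ρ ∈ Ioo (0 : ℝ) 1, DifferentiableAt ℝ (deriv u) ρ)
    (heq : ∀ ρ ∈ Ioo (0 : ℝ) 1, ProfileEq p u ρ) :
    (∀ ρ ∈ Ioo (0 : ℝ) 1,
      deriv (lyapunovH p u) ρ = (((p : ℝ) + 3) * ρ / ((p : ℝ) - 1) - 2 / ρ) * (deriv u ρ) ^ 2 ∧
      deriv (lyapunovH p u) ρ ≤ 0) ∧
    AntitoneOn (lyapunovH p u) (Ioo 0 1) ∧
    (∀ ρ ∈ Ioo (0 : ℝ) 1,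
      -(1 / ((p : ℝ) - 1)) * (2 * ((p : ℝ) + 1) / ((p : ℝ) - 1) ^ 2) ^ ((2 : ℝ) / ((p : ℝ) - 1))
        ≤ lyapunovH p u ρ) := by
  have hpR : (7 : ℝ) ≤ p := by exact_mod_cast hp
  have hp1 : (p : ℝ) - 1 ≠ 0 := by linarith
  have hp2 : (p : ℝ) + 1 ≠ 0 := by linarith
  have hD : ∀ ρ ∈ Ioo (0 : ℝ) 1, HasDerivAt (lyapunovH p u)
      ((((p : ℝ) + 3) * ρ / ((p : ℝ) - 1) - 2 / ρ) * (deriv u ρ) ^ 2) ρ := by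
    intro ρ hρ
    have hρ0 : ρ ≠ 0 := hρ.1.ne'
    have h1 := (hdiff ρ hρ).hasDerivAt
    have h2 := (hdiff2 ρ hρ).hasDerivAt
    have e := heq ρ hρ
    have h3 : HasDerivAt (fun x : ℝ => 1 - x ^ 2) (-(2 * ρ)) ρ := by
      simpa using ((hasDerivAt_id ρ).pow 2).const_sub 1
    have h4 := (((h3.mul (h2.pow 2)).div_const 2).add ((h1.pow (p + 1)).div_const ((p : ℝ) + 1))).sub
      (((h1.pow 2).const_mul ((p : ℝ) + 1)).div_const (((p : ℝ) - 1) ^ 2))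
    refine HasDerivAt.congr_deriv (f := lyapunovH p u) h4 ?_
    unfold ProfileEq alphaP at e
    have e2 : u ρ ^ p = -((1 - ρ ^ 2) * deriv (deriv u) ρ
      + (2 / ρ - (2 + 2 * (2 / ((p : ℝ) - 1))) * ρ) * deriv u ρ
      - 2 / ((p : ℝ) - 1) * (2 / ((p : ℝ) - 1) + 1) * u ρ) := by linarith
    simp only [Nat.add_sub_cancel, e2, Pi.pow_apply]
    push_cast
    field_simp
    ring
  have hN : ∀ ρ ∈ Ioo (0 : ℝ) 1,
      (((p : ℝ) + 3) * ρ / ((p : ℝ) - 1) - 2 / ρ) * (deriv u ρ) ^ 2 ≤ 0 := by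
    intro ρ hρ
    refine mul_nonpos_of_nonpos_of_nonneg ?_ (sq_nonneg _)
    have a1 : ((p : ℝ) + 3) * ρ / ((p : ℝ) - 1) ≤ 2 := by
      rw [div_le_iff₀ (by linarith)]
      nlinarith [hρ.1, hρ.2]
    have a2 : 2 ≤ 2 / ρ := by
      rw [le_div_iff₀ hρ.1]
      linarith [hρ.2]
    linarith
  refine ⟨fun ρ hρ => ?_, ?_, fun ρ hρ => ?_⟩
  · rw [(hD ρ hρ).deriv]
    exact ⟨rfl, hN ρ hρ⟩
  · refine antitoneOn_of_deriv_nonpos (convex_Ioo 0 1)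
      (fun ρ hρ => (hD ρ hρ).continuousAt.continuousWithinAt) ?_ ?_
    · rw [interior_Ioo]
      exact fun ρ hρ => (hD ρ hρ).differentiableAt.differentiableWithinAt
    · rw [interior_Ioo]
      intro ρ hρ
      rw [(hD ρ hρ).deriv]
      exact hN ρ hρ
  · obtain ⟨k, rfl⟩ := hp_odd
    have hk : 3 ≤ k := by omega
    have hk0 : (0 : ℝ) < k := by exact_mod_cast (by omega : 0 < k)
    have hA : 2 * (((2 * k + 1 : ℕ) : ℝ) + 1) / (((2 * k + 1 : ℕ) : ℝ) - 1) ^ 2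
        = ((k : ℝ) + 1) / k ^ 2 := by
      push_cast
      have : (2 * (k : ℝ) + 1 - 1) = 2 * k := by ring
      rw [this]
      field_simp
      ring
    have hE : (2 : ℝ) / (((2 * k + 1 : ℕ) : ℝ) - 1) = (k : ℝ)⁻¹ := by
      push_cast
      have : (2 * (k : ℝ) + 1 - 1) = 2 * k := by ring
      rw [this]
      field_simp
    rw [hA, hE]
    have hApos : 0 ≤ ((k : ℝ) + 1) / k ^ 2 := by positivity
    have hck := Real.rpow_inv_natCast_pow hApos (by omega : k ≠ 0)
    have hc0 := Real.rpow_nonneg hApos (k : ℝ)⁻¹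
    set c := (((k : ℝ) + 1) / k ^ 2) ^ (k : ℝ)⁻¹ with hc
    have key := amgm_aux (u ρ ^ 2) c (sq_nonneg _) hc0 k
    rw [pow_succ c, hck] at key
    have hq : 0 ≤ (1 - ρ ^ 2) * (deriv u ρ) ^ 2 / 2 := by
      have : 0 ≤ 1 - ρ ^ 2 := by nlinarith [hρ.1, hρ.2]
      positivity
    have hu : u ρ ^ (2 * k + 1 + 1) = (u ρ ^ 2) ^ (k + 1) := by
      rw [← pow_mul]; congr 1
    unfold lyapunovH
    rw [hu]
    push_cast
    have t1 : (2 * (k : ℝ) + 1 - 1) = 2 * k := by ring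
    have t2 : (2 * (k : ℝ) + 1 + 1) = 2 * (k + 1) := by ring
    rw [t1, t2]
    generalize (u ρ ^ 2) ^ (k + 1) = Y at *
    have : (Y + k * ((k + 1) / k ^ 2 * c) - (k + 1) * ((k + 1) / k ^ 2) * u ρ ^ 2) / (2 * (k + 1))
      = Y / (2 * ((k : ℝ) + 1)) - 2 * (k + 1) * u ρ ^ 2 / (2 * k) ^ 2 + 1 / (2 * k) * c := by
      field_simp
      ring
    have h5 : 0 ≤ (Y + k * ((k + 1) / k ^ 2 * c) - (k + 1) * ((k + 1) / k ^ 2) * u ρ ^ 2)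
        / (2 * ((k : ℝ) + 1)) := div_nonneg (by linarith) (by positivity)
    linarith
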